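/- Let d be a rational prime, m ≥ 2, n ≥ 1, and let c_0 be a root of the Misiurewicz polynomial G_{d,m,n}(c). Set K = ℚ(c_0), with ring of integers O_K, and a_i = f_{c_0,d}^i(0) for 1 ≤ i ≤ m+n−1. Then every element a_i of the critical orbit {a_1, …, a_{m+n−1}} is square-free in O_K, i.e. the principal ideal (a_i) is not divisible by the square of any prime ideal of O_K. -/

import Mathlib

open Polynomial

noncomputable section

/-- `critPoly d i` is `f_{c,d}^i(0)` as a polynomial in the variable `c` over `ℤ`,
where `f_{c,d}(x) = x^d + c`. -/
def critPoly (d : ℕ) : ℕ → Polynomial ℤ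
  | 0 => 0
  | i + 1 => critPoly d i ^ d + X

/-- The field of rational functions in `c` over `ℚ`, realized as the fraction field of `ℤ[c]`. -/
abbrev RF : Type := FractionRing (Polynomial ℤ)

/-- The natural inclusion `ℤ[c] → ℚ(c)`. -/
def toRF (p : Polynomial ℤ) : RF := algebraMap (Polynomial ℤ) RF p

/-- `G_{d,0,n} = ∏_{k ∣ n} (f_{c,d}^k(0))^{μ(n/k)}` as a rational function. -/
def G0Rat (d n : ℕ) : RF :=
  ∏ k ∈ n.divisors, toRF (critPoly d k) ^ (ArithmeticFunction.moebius (n / k))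

/-- `F_{d,m,n}` as a rational function. -/
def FRat (d m n : ℕ) : RF :=
  ∏ k ∈ n.divisors,
    ((toRF (critPoly d (m + k)) - toRF (critPoly d m)) /
      (toRF (critPoly d (m - 1 + k)) - toRF (critPoly d (m - 1)))) ^
      (ArithmeticFunction.moebius (n / k))

/-- `G_{d,m,n}` (for `m ≥ 2`) as a rational function. -/
def GRat (d m n : ℕ) : RF :=
  if n ∣ m - 1 then FRat d m n / FRat d 1 n else FRat d m n

/-- `G : ℤ[c]` is the Misiurewicz polynomial `G_{d,m,n}` (for `m ≥ 2`). -/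
def IsMisiurewicz (d m n : ℕ) (G : Polynomial ℤ) : Prop := toRF G = GRat d m n

/-- `G0 : ℤ[c]` is the polynomial `G_{d,0,n}`. -/
def IsG0 (d n : ℕ) (G0 : Polynomial ℤ) : Prop := toRF G0 = G0Rat d n

/-!
If `c₀` is a root of `G_{d,m,n}`, then `0` is strictly preperiodic under `x ^ d + c₀`: in every
other case Möbius inversion shows that `G_{d,m,n}` is a unit at `c₀`.

Let `P` be a prime of `O_K`, put `𝔭 = P ∩ ℤ[c₀]`, and let `k` be the period of `0` modulo `P`, so
that `P` contains `a_i` exactly when `k ∣ i`. A relation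
`(a_{t+n} ^ d - a_t ^ d) / (a_{t+n} - a_t) = 0` with `a_{t+n} ≠ a_t` shows that `a_k` divides `d`
in the localization of `ℤ[c₀]` at `𝔭`. As a polynomial in `c`, `a_k` has derivative `1` modulo
`d`, so its reduction modulo `d` is squarefree, and `d` and `a_k` together generate the maximal
ideal of that localization; hence `a_k` alone does. The localization is therefore a discrete
valuation ring with the same fraction field as `O_K`, so `a_k` is a uniformizer at `P`. Finally
`a_i = a_k * (1 + a_k * w)` whenever `k ∣ i` and `i > 0`.
-/

section CritOrbit

variable {R : Type*} [CommRing R] {d : ℕ}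

/-- The critical orbit `a_i = f_{c,d}^i(0)` in an arbitrary commutative (semi)ring. -/
def critOrbit {R : Type*} [CommSemiring R] (d : ℕ) (c : R) (i : ℕ) : R :=
  (fun x => x ^ d + c)^[i] 0

/-- The exact period of the critical point `0` under `x ↦ x ^ d + c`; it is `0` when `0` is not
periodic. -/
def critPeriod {R : Type*} [CommSemiring R] (d : ℕ) (c : R) : ℕ :=
  Function.minimalPeriod (fun x => x ^ d + c) 0

lemma critOrbit_zero {R : Type*} [CommSemiring R] (d : ℕ) (c : R) : critOrbit d c 0 = 0 := rfl

lemma critOrbit_succ {R : Type*} [CommSemiring R] (d : ℕ) (c : R) (i : ℕ) :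
    critOrbit d c (i + 1) = critOrbit d c i ^ d + c :=
  Function.iterate_succ_apply' _ i 0

lemma map_critOrbit {R S : Type*} [CommSemiring R] [CommSemiring S] (f : R →+* S) (d : ℕ) (c : R)
    (i : ℕ) : f (critOrbit d c i) = critOrbit d (f c) i := by
  induction i with
  | zero => simp only [critOrbit_zero, map_zero]
  | succ i ih => simp only [critOrbit_succ, map_add, map_pow, ih]

lemma critOrbit_sub_dvd_critOrbit_add_sub (c : R) (i j l : ℕ) :
    critOrbit d c i - critOrbit d c j ∣ critOrbit d c (i + l) - critOrbit d c (j + l) := by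
  induction l with
  | zero => rfl
  | succ l ih =>
    rw [← add_assoc, ← add_assoc, critOrbit_succ, critOrbit_succ, add_sub_add_right_eq_sub]
    exact ih.trans (sub_dvd_pow_sub_pow _ _ d)

lemma critOrbit_eq_zero_iff {c : R} {i : ℕ} : critOrbit d c i = 0 ↔ critPeriod d c ∣ i :=
  Function.isPeriodicPt_iff_minimalPeriod_dvd

lemma critOrbit_add_eq_iff {c : R} (hc : 0 < critPeriod d c) {i j : ℕ} :
    critOrbit d c (i + j) = critOrbit d c i ↔ critPeriod d c ∣ j := by
  have hper : Function.minimalPeriod (fun x => x ^ d + c) (critOrbit d c i) = critPeriod d c :=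
    Function.minimalPeriod_apply_iterate (Function.minimalPeriod_pos_iff_mem_periodicPts.mp hc) i
  rw [← hper, ← Function.isPeriodicPt_iff_minimalPeriod_dvd, add_comm, critOrbit,
    Function.iterate_add_apply]
  rfl

lemma critOrbit_mem_iff {I : Ideal R} {c : R} {i : ℕ} :
    critOrbit d c i ∈ I ↔ critPeriod d (Ideal.Quotient.mk I c) ∣ i := by
  rw [← Ideal.Quotient.eq_zero_iff_mem, map_critOrbit, critOrbit_eq_zero_iff]

lemma critOrbit_dvd_of_dvd (c : R) {k l : ℕ} (h : k ∣ l) : critOrbit d c k ∣ critOrbit d c l := by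
  rw [← Ideal.mem_span_singleton, critOrbit_mem_iff]
  exact (critOrbit_mem_iff.mp (Ideal.mem_span_singleton_self _)).trans h

lemma critOrbit_dvd_critOrbit_add_sub (c : R) (t : ℕ) {k n : ℕ} (hkn : k ∣ n) :
    critOrbit d c k ∣ critOrbit d c (t + n) - critOrbit d c t := by
  have h := critOrbit_sub_dvd_critOrbit_add_sub (d := d) c n 0 t
  rw [critOrbit_zero, sub_zero, zero_add, add_comm n] at h
  exact (critOrbit_dvd_of_dvd c hkn).trans h

/-- Shift the identity `a_{j+1} - a_1 = a_j ^ d` along the orbit. -/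
lemma critOrbit_pow_dvd_sub (hd : d ≠ 0) (c : R) (j : ℕ) {k : ℕ} (hk : 0 < k) :
    critOrbit d c j ^ d ∣ critOrbit d c (j + k) - critOrbit d c k := by
  obtain ⟨k, rfl⟩ := Nat.exists_eq_add_one.mpr hk
  have h := critOrbit_sub_dvd_critOrbit_add_sub (d := d) c (j + 1) (0 + 1) k
  rw [critOrbit_succ, critOrbit_succ, critOrbit_zero, zero_pow hd, zero_add,
    add_sub_cancel_right] at h
  convert h using 3 <;> ring

lemma exists_critOrbit_eq_mul_one_add (hd : 2 ≤ d) (c : R) {k l : ℕ} (hl : 0 < l) (hkl : k ∣ l) :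
    ∃ w, critOrbit d c l = critOrbit d c k * (1 + critOrbit d c k * w) := by
  obtain ⟨q, rfl⟩ := hkl
  obtain ⟨hk, q, rfl⟩ : 0 < k ∧ ∃ r, q = r + 1 :=
    ⟨Nat.pos_of_mul_pos_right hl, Nat.exists_eq_add_one.mpr (Nat.pos_of_mul_pos_left hl)⟩
  have hsq : critOrbit d c k ^ 2 ∣ critOrbit d c (k * q + k) - critOrbit d c k :=
    (pow_dvd_pow_of_dvd (critOrbit_dvd_of_dvd c (dvd_mul_right k q)) 2).trans <|
      (pow_dvd_pow _ hd).trans (critOrbit_pow_dvd_sub (by omega) c (k * q) hk)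
  obtain ⟨w, hw⟩ := hsq
  exact ⟨w, by rw [mul_add_one]; linear_combination hw⟩

lemma critOrbit_X_injective (hd : d ≠ 0) :
    Function.Injective (critOrbit d (X : ℤ[X])) := by
  have hmono : StrictMono (critOrbit d (1 : ℕ)) := strictMono_nat_of_lt_succ fun i => by
    rw [critOrbit_succ]
    exact Nat.lt_succ_of_le (Nat.le_self_pow hd _)
  have heval (i : ℕ) : eval 1 (critOrbit d (X : ℤ[X]) i) = ((critOrbit d (1 : ℕ) i : ℕ) : ℤ) := by
    rw [← coe_evalRingHom, map_critOrbit, ← Nat.coe_castRingHom, map_critOrbit, map_one,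
      coe_evalRingHom, eval_X]
  intro i j hij
  have := congrArg (eval 1) hij
  rw [heval, heval] at this
  exact hmono.injective (Nat.cast_injective this)

lemma critPoly_eq_critOrbit (d i : ℕ) : critPoly d i = critOrbit d (X : ℤ[X]) i := by
  induction i with
  | zero => rfl
  | succ i ih => rw [critPoly, critOrbit_succ, ih]

lemma separable_critOrbit_X [CharP R d] {k : ℕ} (hk : 0 < k) :
    (critOrbit d (X : R[X]) k).Separable := by
  obtain ⟨k, rfl⟩ := Nat.exists_eq_add_one.mpr hk
  have hderiv : derivative (critOrbit d (X : R[X]) (k + 1)) = 1 := by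
    simp [critOrbit_succ, derivative_pow]
  rw [separable_def, hderiv]
  exact isCoprime_one_right

end CritOrbit

section PowDiffQuot

variable {R : Type*} [CommRing R] {d : ℕ}

/-- The polynomial expression `∑_{i<d} u ^ i * v ^ (d-1-i)` for `(u ^ d - v ^ d) / (u - v)`. -/
def powDiffQuot (d : ℕ) (u v : R) : R := ∑ i ∈ Finset.range d, u ^ i * v ^ (d - 1 - i)

lemma powDiffQuot_mul_sub (u v : R) : powDiffQuot d u v * (u - v) = u ^ d - v ^ d :=
  geom_sum₂_mul u v d

lemma map_powDiffQuot {S : Type*} [CommRing S] (f : R →+* S) (u v : R) :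
    f (powDiffQuot d u v) = powDiffQuot d (f u) (f v) :=
  f.map_geom_sum₂ u v d

lemma powDiffQuot_self (u : R) : powDiffQuot d u u = d * u ^ (d - 1) :=
  geom_sum₂_self u d

lemma powDiffQuot_zero_right [IsDomain R] (hd : d ≠ 0) {u : R} (hu : u ≠ 0) :
    powDiffQuot d u 0 = u ^ (d - 1) := by
  refine mul_right_cancel₀ hu ?_
  have h := powDiffQuot_mul_sub (d := d) u 0
  rwa [sub_zero, zero_pow hd, sub_zero, ← pow_sub_one_mul hd u] at h

lemma powDiffQuot_mul_mul (x u v : R) :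
    powDiffQuot d (x * u) (x * v) = x ^ (d - 1) * powDiffQuot d u v := by
  rw [powDiffQuot, powDiffQuot, Finset.mul_sum]
  refine Finset.sum_congr rfl fun i hi => ?_
  have hexp : x ^ (d - 1) = x ^ i * x ^ (d - 1 - i) := by
    rw [← pow_add, Nat.add_sub_cancel' (Nat.le_sub_one_of_lt (Finset.mem_range.mp hi))]
  rw [mul_pow, mul_pow, hexp]
  ring

lemma dvd_mul_pow_of_powDiffQuot_eq_zero {x u v : R} (hx : x ∣ u - v)
    (h : powDiffQuot d u v = 0) : x ∣ d * v ^ (d - 1) :=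
  (dvd_geom_sum₂_iff_of_dvd_sub hx).mp <| by
    rw [← powDiffQuot, h]
    exact dvd_zero x

lemma powDiffQuot_critOrbit_mul_sub (c : R) (t n : ℕ) :
    powDiffQuot d (critOrbit d c (t + n)) (critOrbit d c t) *
      (critOrbit d c (t + n) - critOrbit d c t) =
        critOrbit d c (t + 1 + n) - critOrbit d c (t + 1) := by
  rw [powDiffQuot_mul_sub, add_right_comm, critOrbit_succ, critOrbit_succ,
    add_sub_add_right_eq_sub]

end PowDiffQuot

section UnitsAt

variable {R D : Type*} [CommRing R] [IsDomain R] [CommRing D] [IsDomain D] {φ : R →+* D}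

/-- The fractions `p / q` over `R` with neither `φ p` nor `φ q` zero: for a domain, the units of the
localization of `R` at the prime `ker φ`, viewed in the fraction field. -/
def unitsAt (φ : R →+* D) : Submonoid (FractionRing R) where
  carrier := {x | ∃ p q, φ p ≠ 0 ∧ φ q ≠ 0 ∧
    x = algebraMap R (FractionRing R) p / algebraMap R (FractionRing R) q}
  one_mem' := ⟨1, 1, by simp, by simp, by simp⟩
  mul_mem' := by
    rintro _ _ ⟨p, q, hp, hq, rfl⟩ ⟨p', q', hp', hq', rfl⟩
    exact ⟨p * p', q * q', by simp [hp, hp'], by simp [hq, hq'],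
      by rw [map_mul, map_mul, div_mul_div_comm]⟩

lemma algebraMap_mem_unitsAt {p : R} :
    algebraMap R (FractionRing R) p ∈ unitsAt φ ↔ φ p ≠ 0 := by
  refine ⟨?_, fun h => ⟨p, 1, h, by simp, by simp⟩⟩
  rintro ⟨a, b, ha, hb, h⟩
  have hb0 : algebraMap R (FractionRing R) b ≠ 0 :=
    (map_ne_zero_iff _ (IsFractionRing.injective R _)).mpr fun h0 => hb (by rw [h0, map_zero])
  rw [eq_div_iff hb0, ← map_mul] at h
  have hpb : φ p * φ b = φ a := by rw [← map_mul, IsFractionRing.injective R _ h]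
  exact left_ne_zero_of_mul (hpb ▸ ha)

lemma inv_mem_unitsAt {x : FractionRing R} (hx : x ∈ unitsAt φ) : x⁻¹ ∈ unitsAt φ := by
  obtain ⟨p, q, hp, hq, rfl⟩ := hx
  exact ⟨q, p, hq, hp, inv_div _ _⟩

lemma div_mem_unitsAt {x y : FractionRing R} (hx : x ∈ unitsAt φ) (hy : y ∈ unitsAt φ) :
    x / y ∈ unitsAt φ := by
  rw [div_eq_mul_inv]
  exact mul_mem hx (inv_mem_unitsAt hy)

lemma zpow_mem_unitsAt {x : FractionRing R} (hx : x ∈ unitsAt φ) (k : ℤ) :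
    x ^ k ∈ unitsAt φ := by
  cases k with
  | ofNat k => simpa only [Int.ofNat_eq_natCast, zpow_natCast] using pow_mem hx k
  | negSucc k =>
    rw [zpow_negSucc]
    exact inv_mem_unitsAt (pow_mem hx _)

end UnitsAt

lemma prod_ite_dvd_zpow_moebius {K : Type*} [Field K] {B : K} (hB : B ≠ 0) (k : ℕ) {n : ℕ}
    (hn : 0 < n) :
    ∏ j ∈ n.divisors, (if k ∣ j then B else 1) ^ ArithmeticFunction.moebius (n / j) =
      if k = n then B else 1 := by
  rw [← Nat.prod_divisorsAntidiagonal' fun i j =>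
    (if k ∣ j then B else 1) ^ ArithmeticFunction.moebius i]
  refine (ArithmeticFunction.prod_eq_iff_prod_pow_moebius_eq_of_nonzero
    (f := fun j => if k = j then B else 1) (g := fun j => if k ∣ j then B else 1)
    (fun j _ => ?_) (fun j _ => ?_)).mp (fun m hm => ?_) n hn
  · split_ifs <;> simp [hB]
  · split_ifs <;> simp [hB]
  · simp [Finset.prod_ite_eq, Nat.mem_divisors, hm.ne']

section Misiurewicz

variable {D : Type*} [CommRing D] {d : ℕ} {φ : ℤ[X] →+* D}

lemma toRF_ne_zero {p : ℤ[X]} (hp : p ≠ 0) : toRF p ≠ 0 :=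
  (map_ne_zero_iff _ (IsFractionRing.injective ℤ[X] RF)).mpr hp

lemma toRF_critOrbit_X_ne_zero (hd : d ≠ 0) {k : ℕ} (hk : 0 < k) :
    toRF (critOrbit d X k) ≠ 0 :=
  toRF_ne_zero fun h => hk.ne' (critOrbit_X_injective hd (h.trans (critOrbit_zero d X).symm))

lemma FRat_succ_eq_prod (hd : d ≠ 0) (t n : ℕ) :
    FRat d (t + 1) n = ∏ j ∈ n.divisors,
      toRF (powDiffQuot d (critOrbit d X (t + j)) (critOrbit d X t)) ^
        ArithmeticFunction.moebius (n / j) := by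
  refine Finset.prod_congr rfl fun j hj => ?_
  have hj0 : 0 < j := Nat.pos_of_mem_divisors hj
  have hne : critOrbit d (X : ℤ[X]) (t + j) - critOrbit d X t ≠ 0 := fun h => by
    have := critOrbit_X_injective hd (sub_eq_zero.mp h)
    omega
  have hquot := congrArg toRF (powDiffQuot_critOrbit_mul_sub (d := d) (X : ℤ[X]) t j)
  simp only [critPoly_eq_critOrbit, Nat.add_sub_cancel]
  congr 1
  rw [div_eq_iff]
  · simpa only [toRF, map_mul, map_sub] using hquot.symm
  · simpa only [toRF, map_sub] using toRF_ne_zero hne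

lemma exists_critOrbit_X_eq_mul (hd : 2 ≤ d) {l : ℕ}
    (hl : 0 < l) (hkl : critPeriod d (φ X) ∣ l) :
    ∃ u, φ u = 1 ∧ critOrbit d X l = critOrbit d X (critPeriod d (φ X)) * u := by
  obtain ⟨w, hw⟩ := exists_critOrbit_eq_mul_one_add hd (X : ℤ[X]) hl hkl
  refine ⟨_, ?_, hw⟩
  rw [map_add, map_mul, map_critOrbit, critOrbit_eq_zero_iff.mpr dvd_rfl, map_one, zero_mul,
    add_zero]

variable [IsDomain D]

lemma GRat_mem_unitsAt_of_injective (hd : d ≠ 0) (t n : ℕ)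
    (hinj : Function.Injective (critOrbit d (φ X))) : GRat d (t + 1) n ∈ unitsAt φ := by
  have hF (s : ℕ) : FRat d (s + 1) n ∈ unitsAt φ := by
    rw [FRat_succ_eq_prod hd]
    refine prod_mem fun j hj => zpow_mem_unitsAt (algebraMap_mem_unitsAt.mpr ?_) _
    rw [map_powDiffQuot, map_critOrbit, map_critOrbit]
    refine left_ne_zero_of_mul (b := critOrbit d (φ X) (s + j) - critOrbit d (φ X) s) ?_
    rw [powDiffQuot_critOrbit_mul_sub, sub_ne_zero, hinj.ne_iff]
    have := Nat.pos_of_mem_divisors hj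
    omega
  rw [GRat]
  split_ifs
  · exact div_mem_unitsAt (hF t) (hF 0)
  · exact hF t

lemma powDiffQuot_critOrbit_ne_zero [CharZero D] (hd : d ≠ 0) {c : D} (hc : 0 < critPeriod d c)
    {t j : ℕ} (htj : ¬(critPeriod d c ∣ t ∧ critPeriod d c ∣ j)) :
    powDiffQuot d (critOrbit d c (t + j)) (critOrbit d c t) ≠ 0 := by
  by_cases hj : critPeriod d c ∣ j
  · have ht : critOrbit d c t ≠ 0 := fun h => htj ⟨critOrbit_eq_zero_iff.mp h, hj⟩
    rw [(critOrbit_add_eq_iff hc).mpr hj, powDiffQuot_self]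
    exact mul_ne_zero (Nat.cast_ne_zero.mpr hd) (pow_ne_zero _ ht)
  · refine left_ne_zero_of_mul (b := critOrbit d c (t + j) - critOrbit d c t) ?_
    rw [powDiffQuot_critOrbit_mul_sub, sub_ne_zero]
    exact fun h => hj ((critOrbit_add_eq_iff hc).mp h)

lemma exists_powDiffQuot_critOrbit_X_eq_mul [CharZero D] (hd : 2 ≤ d) {t j : ℕ} (hj : 0 < j)
    (hkt : critPeriod d (φ X) ∣ t) (hkj : critPeriod d (φ X) ∣ j) :
    ∃ w, φ w ≠ 0 ∧ powDiffQuot d (critOrbit d X (t + j)) (critOrbit d X t) =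
      critOrbit d X (critPeriod d (φ X)) ^ (d - 1) * w := by
  obtain ⟨u, hu, hu_eq⟩ := exists_critOrbit_X_eq_mul hd (by omega) (dvd_add hkt hkj)
  obtain ⟨v, hv, hv_eq⟩ : ∃ v, powDiffQuot d 1 (φ v) ≠ 0 ∧
      critOrbit d X t = critOrbit d X (critPeriod d (φ X)) * v := by
    rcases t.eq_zero_or_pos with rfl | ht
    · refine ⟨0, ?_, by rw [critOrbit_zero, mul_zero]⟩
      rw [map_zero, powDiffQuot_zero_right (by omega) one_ne_zero]
      exact pow_ne_zero _ one_ne_zero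
    · obtain ⟨v, hv, hv_eq⟩ := exists_critOrbit_X_eq_mul hd ht hkt
      refine ⟨v, ?_, hv_eq⟩
      rw [hv, powDiffQuot_self, one_pow, mul_one, Nat.cast_ne_zero]
      omega
  refine ⟨powDiffQuot d u v, ?_, by rw [hu_eq, hv_eq, powDiffQuot_mul_mul]⟩
  rwa [map_powDiffQuot, hu]

/-- Möbius inversion leaves at most one factor vanishing at `φ X`, the one for `k = n`. -/
lemma exists_FRat_eq_mul [CharZero D] (hd : 2 ≤ d) (t : ℕ) {n : ℕ} (hn : 0 < n)
    (hk : 0 < critPeriod d (φ X)) :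
    ∃ y ∈ unitsAt φ, FRat d (t + 1) n =
      (if critPeriod d (φ X) ∣ t ∧ critPeriod d (φ X) = n then
        toRF (critOrbit d X (critPeriod d (φ X))) ^ (d - 1) else 1) * y := by
  set k := critPeriod d (φ X)
  set B := toRF (critOrbit d X k) ^ (d - 1)
  set S := fun j => powDiffQuot d (critOrbit d (X : ℤ[X]) (t + j)) (critOrbit d X t)
  have hφS (j : ℕ) (h : ¬(k ∣ t ∧ k ∣ j)) : φ (S j) ≠ 0 := by
    rw [map_powDiffQuot, map_critOrbit, map_critOrbit]
    exact powDiffQuot_critOrbit_ne_zero (by omega) hk h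
  have hS (j : ℕ) (hj : 0 < j) :
      ∃ y ∈ unitsAt φ, toRF (S j) = (if k ∣ t ∧ k ∣ j then B else 1) * y := by
    split_ifs with h
    · obtain ⟨w, hw, hSw⟩ := exists_powDiffQuot_critOrbit_X_eq_mul hd hj h.1 h.2
      exact ⟨_, algebraMap_mem_unitsAt.mpr hw, by simp only [S, B, toRF, hSw, map_mul, map_pow, k]⟩
    · exact ⟨_, algebraMap_mem_unitsAt.mpr (hφS j h), (one_mul _).symm⟩
  choose! y hy hSy using hS
  refine ⟨∏ j ∈ n.divisors, y j ^ ArithmeticFunction.moebius (n / j), prod_mem fun j hj =>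
    zpow_mem_unitsAt (hy j (Nat.pos_of_mem_divisors hj)) _, ?_⟩
  have hB : B ≠ 0 := pow_ne_zero _ (toRF_critOrbit_X_ne_zero (by omega) hk)
  have hmoebius : ∏ j ∈ n.divisors,
      (if k ∣ t ∧ k ∣ j then B else 1) ^ ArithmeticFunction.moebius (n / j) =
        if k ∣ t ∧ k = n then B else 1 := by
    by_cases hkt : k ∣ t
    · simpa only [hkt, true_and] using prod_ite_dvd_zpow_moebius hB k hn
    · simp only [hkt, false_and, if_false, one_zpow, Finset.prod_const_one]
  rw [FRat_succ_eq_prod (by omega), ← hmoebius, ← Finset.prod_mul_distrib]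
  refine Finset.prod_congr rfl fun j hj => ?_
  rw [← mul_zpow, ← hSy j (Nat.pos_of_mem_divisors hj)]

lemma GRat_mem_unitsAt_of_critPeriod_pos [CharZero D] (hd : 2 ≤ d) (t : ℕ) {n : ℕ} (hn : 0 < n)
    (hk : 0 < critPeriod d (φ X)) : GRat d (t + 1) n ∈ unitsAt φ := by
  obtain ⟨y, hy, hFt⟩ := exists_FRat_eq_mul hd t hn hk
  obtain ⟨z, hz, hF₀⟩ := exists_FRat_eq_mul hd 0 hn hk
  rw [GRat, Nat.add_sub_cancel]
  split_ifs with hnt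
  · have hcond : (critPeriod d (φ X) ∣ t ∧ critPeriod d (φ X) = n) ↔
        (critPeriod d (φ X) ∣ 0 ∧ critPeriod d (φ X) = n) :=
      and_congr_left fun h => by simp only [h, hnt, dvd_zero]
    rw [hFt, ← zero_add 1, hF₀, if_congr hcond rfl rfl, mul_div_mul_left]
    · exact div_mem_unitsAt hy hz
    · have hA := toRF_critOrbit_X_ne_zero (by omega : d ≠ 0) hk
      split_ifs
      exacts [pow_ne_zero _ hA, one_ne_zero]
  · have hcond : ¬(critPeriod d (φ X) ∣ t ∧ critPeriod d (φ X) = n) := fun h => hnt (h.2 ▸ h.1)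
    rwa [hFt, if_neg hcond, one_mul]

variable {m n : ℕ} {G : ℤ[X]}

lemma GRat_notMem_unitsAt (hG : IsMisiurewicz d m n G) (hroot : φ G = 0) :
    GRat d m n ∉ unitsAt φ := by
  rw [← show toRF G = GRat d m n from hG, toRF, algebraMap_mem_unitsAt, not_not]
  exact hroot

lemma critOrbit_ne_zero_of_isMisiurewicz [CharZero D] (hd : 2 ≤ d) (hm : 0 < m) (hn : 0 < n)
    (hG : IsMisiurewicz d m n G) (hroot : φ G = 0) {i : ℕ} (hi : 0 < i) :
    critOrbit d (φ X) i ≠ 0 := fun h => by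
  obtain ⟨t, rfl⟩ := Nat.exists_eq_add_one.mpr hm
  exact GRat_notMem_unitsAt hG hroot <| GRat_mem_unitsAt_of_critPeriod_pos hd t hn <|
    Nat.pos_of_dvd_of_pos (critOrbit_eq_zero_iff.mp h) hi

lemma not_injective_critOrbit_of_isMisiurewicz (hd : d ≠ 0) (hm : 0 < m)
    (hG : IsMisiurewicz d m n G) (hroot : φ G = 0) :
    ¬Function.Injective (critOrbit d (φ X)) := fun h => by
  obtain ⟨t, rfl⟩ := Nat.exists_eq_add_one.mpr hm
  exact GRat_notMem_unitsAt hG hroot (GRat_mem_unitsAt_of_injective hd t n h)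

end Misiurewicz

lemma one_add_mul_notMem {R : Type*} [CommRing R] {P : Ideal R} [hP : P.IsPrime] {x : R}
    (hx : x ∈ P) (w : R) : 1 + x * w ∉ P := fun h =>
  hP.one_notMem ((P.add_mem_iff_left (P.mul_mem_right w hx)).mp h)

section Preperiodic

variable {R : Type*} [CommRing R] [IsDomain R] {d : ℕ} {c : R}

lemma exists_critOrbit_collision (hd : d ≠ 0) (h0 : ∀ i, 0 < i → critOrbit d c i ≠ 0)
    (hinj : ¬Function.Injective (critOrbit d c)) :
    ∃ t > 0, ∃ n, critOrbit d c (t + n) ≠ critOrbit d c t ∧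
      critOrbit d c (t + 1 + n) = critOrbit d c (t + 1) := by
  classical
  obtain ⟨i, j, hij, hlt⟩ : ∃ i j, critOrbit d c i = critOrbit d c j ∧ i < j := by
    obtain ⟨i, j, hij, hne⟩ := Function.not_injective_iff.mp hinj
    rcases hne.lt_or_gt with h | h
    exacts [⟨i, j, hij, h⟩, ⟨j, i, hij.symm, h⟩]
  obtain ⟨n, hn, rfl⟩ : ∃ n > 0, j = i + n := ⟨j - i, by omega, by omega⟩
  have hex : ∃ s, critOrbit d c (s + n) = critOrbit d c s := ⟨i, hij.symm⟩
  obtain ⟨t, ht⟩ : ∃ t, Nat.find hex = t + 1 := Nat.exists_eq_add_one.mpr <| by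
    rw [Nat.find_pos, zero_add]
    exact h0 n hn
  refine ⟨t, Nat.pos_of_ne_zero ?_, n, Nat.find_min hex (by omega), ht ▸ Nat.find_spec hex⟩
  rintro rfl
  have h1 : critOrbit d c (n + 1) = critOrbit d c (0 + 1) := by
    rw [add_comm n, ← ht]
    exact ht ▸ Nat.find_spec hex
  rw [critOrbit_succ, critOrbit_succ, critOrbit_zero, zero_pow hd, add_left_inj] at h1
  exact h0 n hn (eq_zero_of_pow_eq_zero h1)

/-- The relation `(a_{t+n} ^ d - a_t ^ d) / (a_{t+n} - a_t) = 0`, read modulo `a_k`, becomes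
`d * a_t ^ (d - 1) = 0`; if `k ∣ t`, one first divides it by `a_k ^ (d - 1)`. -/
lemma exists_critOrbit_dvd_mul_natCast (hd : 2 ≤ d) {P : Ideal R} [P.IsPrime] {k : ℕ} (hk : 0 < k)
    (hkP : critPeriod d (Ideal.Quotient.mk P c) = k) (hk0 : critOrbit d c k ≠ 0) {t n : ℕ}
    (ht : 0 < t) (hne : critOrbit d c (t + n) ≠ critOrbit d c t)
    (heq : critOrbit d c (t + 1 + n) = critOrbit d c (t + 1)) :
    ∃ u ∉ P, critOrbit d c k ∣ d * u := by
  have hquot : powDiffQuot d (critOrbit d c (t + n)) (critOrbit d c t) = 0 := by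
    have h := powDiffQuot_critOrbit_mul_sub (d := d) c t n
    rw [heq, sub_self] at h
    exact (mul_eq_zero.mp h).resolve_right (sub_ne_zero.mpr hne)
  have hkn : k ∣ n := by
    rw [← hkP, ← critOrbit_add_eq_iff (hkP ▸ hk) (i := t + 1), ← map_critOrbit, ← map_critOrbit,
      heq]
  have hmem {i : ℕ} : critOrbit d c i ∈ P ↔ k ∣ i := hkP ▸ critOrbit_mem_iff
  by_cases hkt : k ∣ t
  · obtain ⟨v, hv⟩ := exists_critOrbit_eq_mul_one_add hd c ht hkt
    obtain ⟨w, hw⟩ := exists_critOrbit_eq_mul_one_add hd c (by omega) (dvd_add hkt hkn)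
    rw [hv, hw, powDiffQuot_mul_mul] at hquot
    refine ⟨(1 + critOrbit d c k * v) ^ (d - 1), fun h => ?_,
      dvd_mul_pow_of_powDiffQuot_eq_zero ⟨w - v, by ring⟩
        ((mul_eq_zero.mp hquot).resolve_left (pow_ne_zero _ hk0))⟩
    exact one_add_mul_notMem (hmem.mpr dvd_rfl) v (Ideal.IsPrime.mem_of_pow_mem ‹_› _ h)
  · exact ⟨critOrbit d c t ^ (d - 1),
      fun h => hkt (hmem.mp (Ideal.IsPrime.mem_of_pow_mem ‹_› _ h)),
      dvd_mul_pow_of_powDiffQuot_eq_zero (critOrbit_dvd_critOrbit_add_sub c t hkn) hquot⟩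

end Preperiodic
section LocallyGenerates

variable {R : Type*} [CommRing R]

/-- For a prime ideal `𝔭`, the image of `x` generates the maximal ideal of the localization
at `𝔭`; stated with denominators cleared. -/
def LocallyGenerates (𝔭 : Ideal R) (x : R) : Prop :=
  x ∈ 𝔭 ∧ ∀ g ∈ 𝔭, ∃ s ∉ 𝔭, x ∣ s * g

lemma locallyGenerates_of_squarefree [IsPrincipalIdealRing R] {𝔭 : Ideal R} [h𝔭 : 𝔭.IsPrime]
    {x : R} (hx : x ∈ 𝔭) (hsq : Squarefree x) : LocallyGenerates 𝔭 x := by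
  obtain ⟨p, rfl⟩ := IsPrincipalIdealRing.principal 𝔭
  simp only [Ideal.submodule_span_eq] at h𝔭 hx ⊢
  obtain ⟨r, rfl⟩ := Ideal.mem_span_singleton.mp hx
  refine ⟨hx, fun g hg => ⟨r, fun hr => ?_, ?_⟩⟩
  · exact h𝔭.ne_top (Ideal.span_singleton_eq_top.mpr
      (hsq p (mul_dvd_mul_left p (Ideal.mem_span_singleton.mp hr))))
  · rw [mul_comm p r]
    exact mul_dvd_mul_left r (Ideal.mem_span_singleton.mp hg)

lemma LocallyGenerates.exists_mul_mem_of_map {S : Type*} [CommRing S] {f : R →+* S}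
    (hf : Function.Surjective f) {𝔭 : Ideal R} {x : R} (h : LocallyGenerates (𝔭.map f) (f x))
    {g : R} (hg : g ∈ 𝔭) : ∃ s ∉ 𝔭, s * g ∈ Ideal.span {x} ⊔ RingHom.ker f := by
  obtain ⟨s, hs, y, hy⟩ := h.2 (f g) (Ideal.mem_map_of_mem f hg)
  obtain ⟨s, rfl⟩ := hf s
  obtain ⟨y, rfl⟩ := hf y
  refine ⟨s, fun h => hs (Ideal.mem_map_of_mem f h), ?_⟩
  have hker : s * g - x * y ∈ RingHom.ker f := by
    rw [RingHom.mem_ker, map_sub, map_mul, map_mul, hy, sub_self]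
  rw [← add_sub_cancel (x * y) (s * g)]
  exact Submodule.add_mem_sup (Ideal.mem_span_singleton.mpr (dvd_mul_right x y)) hker

variable {d : ℕ} {φ : ℤ[X] →+* R}

lemma ker_mapRingHom_intCast_zmod (d : ℕ) :
    RingHom.ker (mapRingHom (Int.castRingHom (ZMod d))) = Ideal.span {(d : ℤ[X])} := by
  rw [Polynomial.ker_mapRingHom, ZMod.ker_intCastRingHom, Ideal.map_span, Set.image_singleton]
  simp

lemma exists_mul_mem_span_critOrbit (hφ : Function.Surjective φ) (hd : d.Prime) {P : Ideal R}
    [P.IsPrime] (hdP : (d : R) ∈ P) {k : ℕ} (hk : 0 < k) (hkP : critOrbit d (φ X) k ∈ P) {g : R}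
    (hg : g ∈ P) : ∃ s ∉ P, s * g ∈ Ideal.span {critOrbit d (φ X) k, (d : R)} := by
  have : Fact d.Prime := ⟨hd⟩
  set π := mapRingHom (Int.castRingHom (ZMod d))
  have hπ : Function.Surjective π := Polynomial.map_surjective _ (ZMod.ringHom_surjective _)
  have hker : RingHom.ker π ≤ P.comap φ := by
    rw [ker_mapRingHom_intCast_zmod, Ideal.span_singleton_le_iff_mem, Ideal.mem_comap, map_natCast]
    exact hdP
  have := Ideal.map_isPrime_of_surjective hπ hker
  have hgen : LocallyGenerates ((P.comap φ).map π) (π (critOrbit d X k)) := by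
    refine locallyGenerates_of_squarefree (Ideal.mem_map_of_mem π ?_) ?_
    · rwa [Ideal.mem_comap, map_critOrbit]
    · rw [map_critOrbit, coe_mapRingHom, map_X]
      exact (separable_critOrbit_X hk).squarefree
  obtain ⟨g, rfl⟩ := hφ g
  obtain ⟨s, hs, hsg⟩ := hgen.exists_mul_mem_of_map hπ hg
  refine ⟨φ s, hs, ?_⟩
  have h := Ideal.mem_map_of_mem φ hsg
  rwa [ker_mapRingHom_intCast_zmod, ← Ideal.span_insert, map_mul, Ideal.map_span, Set.image_pair,
    map_critOrbit, map_natCast] at h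

lemma locallyGenerates_critOrbit [IsDomain R] (hφ : Function.Surjective φ) (hd : d.Prime)
    {P : Ideal R} [P.IsPrime] {k : ℕ} (hk : 0 < k)
    (hkP : critPeriod d (Ideal.Quotient.mk P (φ X)) = k) (hk0 : critOrbit d (φ X) k ≠ 0)
    {t n : ℕ} (ht : 0 < t) (hne : critOrbit d (φ X) (t + n) ≠ critOrbit d (φ X) t)
    (heq : critOrbit d (φ X) (t + 1 + n) = critOrbit d (φ X) (t + 1)) :
    LocallyGenerates P (critOrbit d (φ X) k) := by
  have hmem : critOrbit d (φ X) k ∈ P := critOrbit_mem_iff.mpr hkP.dvd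
  obtain ⟨u, hu, hdvd⟩ := exists_critOrbit_dvd_mul_natCast hd.two_le hk hkP hk0 ht hne heq
  have hdP : (d : R) ∈ P :=
    (Ideal.IsPrime.mem_or_mem ‹_› (P.mem_of_dvd hdvd hmem)).resolve_right hu
  refine ⟨hmem, fun g hg => ?_⟩
  obtain ⟨s, hs, hsg⟩ := exists_mul_mem_span_critOrbit hφ hd hdP hk hmem hg
  obtain ⟨a, b, hab⟩ := Ideal.mem_span_pair.mp hsg
  refine ⟨u * s, Ideal.IsPrime.mul_notMem ‹_› hu hs, ?_⟩
  have hexp : u * s * g = critOrbit d (φ X) k * (u * a) + d * u * b := by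
    linear_combination (-u) * hab
  rw [hexp]
  exact dvd_add (dvd_mul_right _ _) (hdvd.mul_right b)

end LocallyGenerates

lemma exists_aeval_mul_eq_aeval {K : Type*} [Field K] [NumberField K]
    {c : NumberField.RingOfIntegers K} (hgen : Algebra.adjoin ℚ {(c : K)} = ⊤)
    (y : NumberField.RingOfIntegers K) :
    ∃ a b : ℤ[X], aeval c b ≠ 0 ∧ aeval c b * y = aeval c a := by
  obtain ⟨p, hp⟩ : ∃ p : ℚ[X], aeval (c : K) p = y := by
    rw [← AlgHom.mem_range, ← Algebra.adjoin_singleton_eq_range_aeval, hgen]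
    exact Algebra.mem_top
  obtain ⟨N, hN, hNp⟩ := IsLocalization.integerNormalization_spec (nonZeroDivisors ℤ) p
  refine ⟨IsLocalization.integerNormalization (nonZeroDivisors ℤ) p, C N, ?_, ?_⟩
  · rw [aeval_C, algebraMap_int_eq, eq_intCast, Int.cast_ne_zero]
    exact nonZeroDivisors.ne_zero hN
  · apply NumberField.RingOfIntegers.coe_injective
    have h := congrArg (aeval (c : K)) hNp
    rw [aeval_map_algebraMap, map_zsmul, zsmul_eq_mul, hp] at h
    rw [← aeval_algebraMap_apply, h, map_mul, aeval_C, algebraMap_int_eq, eq_intCast, map_intCast]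

section Dedekind

open IsDedekindDomain WithZero

variable {R D : Type*} [CommRing R] [CommRing D] [IsDedekindDomain D] {ι : R →+* D} {x : R}

lemma LocallyGenerates.exists_intValuation_eq_pow {v : HeightOneSpectrum D}
    (h : LocallyGenerates (v.asIdeal.comap ι) x) {g : R} (hg : ι g ≠ 0) :
    ∃ e : ℕ, v.intValuation (ι g) = v.intValuation (ι x) ^ e := by
  have hunit {s : R} (hs : s ∉ v.asIdeal.comap ι) : v.intValuation (ι s) = 1 :=
    (v.intValuation_eq_one_iff_mem_primeCompl _).mpr hs
  obtain ⟨N, hN⟩ : ∃ N : ℕ, ι g ∉ v.asIdeal ^ N := by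
    by_contra! hmem
    refine hg (Ideal.mem_bot.mp ?_)
    rw [← Ideal.iInf_pow_eq_bot_of_isDomain v.asIdeal v.isPrime.ne_top]
    exact Ideal.mem_iInf.mpr hmem
  induction N generalizing g with
  | zero => exact absurd (by simp) hN
  | succ N ih =>
    by_cases hgP : g ∈ v.asIdeal.comap ι
    · obtain ⟨s, hs, y, hy⟩ := h.2 g hgP
      have hsg : ι s * ι g = ι x * ι y := by rw [← map_mul, ← map_mul, hy]
      have hs0 : ι s ≠ 0 := fun h0 => hs (by rw [Ideal.mem_comap, h0]; exact zero_mem _)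
      have hy0 : ι y ≠ 0 := right_ne_zero_of_mul (hsg ▸ mul_ne_zero hs0 hg)
      obtain ⟨e, he⟩ := ih hy0 fun hyN => by
        have hmem : ι s * ι g ∈ v.asIdeal ^ (N + 1) := by
          rw [hsg, pow_succ']
          exact Ideal.mul_mem_mul h.1 hyN
        exact (Ideal.IsPrime.mul_mem_pow _ hmem).elim hs hN
      refine ⟨e + 1, ?_⟩
      rw [pow_succ', ← he, ← map_mul, ← hsg, map_mul, hunit hs, one_mul]
    · exact ⟨0, by rw [hunit hgP, pow_zero]⟩

/-- Every element of `D` is a fraction over `R`, so every `v`-adic valuation, in particular that of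
a uniformizer, is an integral power of the valuation of `x`. -/
lemma LocallyGenerates.notMem_sq {v : HeightOneSpectrum D}
    (h : LocallyGenerates (v.asIdeal.comap ι) x) (hx : ι x ≠ 0)
    (hfrac : ∀ y : D, ∃ a b : R, ι b ≠ 0 ∧ ι b * y = ι a) : ι x ∉ v.asIdeal ^ 2 := fun hmem => by
  obtain ⟨p, hp⟩ := v.intValuation_exists_uniformizer
  obtain ⟨a, b, hb, hbp⟩ := hfrac p
  have hp0 : p ≠ 0 := fun h0 => exp_ne_zero (by rw [← hp, h0, map_zero])
  obtain ⟨e, he⟩ := h.exists_intValuation_eq_pow hb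
  obtain ⟨f, hf⟩ := h.exists_intValuation_eq_pow (hbp ▸ mul_ne_zero hb hp0)
  obtain ⟨j, hj⟩ : ∃ j : ℤ, v.intValuation (ι x) = exp j :=
    ⟨_, (exp_log (v.intValuation_ne_zero _ hx)).symm⟩
  have hval : exp ((e : ℤ) * j + -1) = exp ((f : ℤ) * j) := by
    rw [exp_add, ← nsmul_eq_mul, ← nsmul_eq_mul, exp_nsmul, exp_nsmul, ← hj, ← he, ← hf, ← hp,
      ← map_mul, hbp]
  have hunit : IsUnit j := IsUnit.of_mul_eq_one ((e : ℤ) - f) <| by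
    linear_combination exp_injective hval
  have hle : j ≤ -2 := by
    rw [← exp_le_exp, ← hj]
    exact (v.intValuation_le_pow_iff_mem _ 2).mpr hmem
  rcases Int.isUnit_iff.mp hunit with rfl | rfl <;> omega

lemma critOrbit_notMem_sq {φ : ℤ[X] →+* D} {d : ℕ} (hd : d.Prime)
    (hfrac : ∀ y : D, ∃ a b : ℤ[X], φ b ≠ 0 ∧ φ b * y = φ a)
    (h0 : ∀ i, 0 < i → critOrbit d (φ X) i ≠ 0)
    (hinj : ¬Function.Injective (critOrbit d (φ X))) {i : ℕ} (hi : 0 < i)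
    {P : Ideal D} (hP : P.IsPrime) : critOrbit d (φ X) i ∉ P ^ 2 := fun hmem => by
  have hbot : P ≠ ⊥ := by
    rintro rfl
    exact h0 i hi (Ideal.mem_bot.mp (Ideal.bot_pow (R := D) two_ne_zero ▸ hmem))
  set c := φ.rangeRestrict X
  have hc (j : ℕ) : φ.range.subtype (critOrbit d c j) = critOrbit d (φ X) j := map_critOrbit _ d c j
  have hinj' : Function.Injective φ.range.subtype := Subtype.val_injective
  obtain ⟨t, ht, n, hne, heq⟩ : ∃ t > 0, ∃ n, critOrbit d c (t + n) ≠ critOrbit d c t ∧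
      critOrbit d c (t + 1 + n) = critOrbit d c (t + 1) := by
    simpa only [← hc, hinj'.eq_iff, hinj'.ne_iff] using
      exists_critOrbit_collision hd.ne_zero h0 hinj
  set k := critPeriod d (Ideal.Quotient.mk (P.comap φ.range.subtype) c) with hk_def
  have hki : k ∣ i := critOrbit_mem_iff.mp <| by
    rw [Ideal.mem_comap, hc]
    exact Ideal.pow_le_self two_ne_zero hmem
  have hk : 0 < k := Nat.pos_of_dvd_of_pos hki hi
  have hk0 : critOrbit d c k ≠ 0 := fun h => h0 k hk (by rw [← hc, h, map_zero])
  have hgen : LocallyGenerates (P.comap φ.range.subtype) (critOrbit d c k) :=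
    locallyGenerates_critOrbit φ.rangeRestrict_surjective hd hk hk_def.symm hk0 ht hne heq
  have hkP : critOrbit d (φ X) k ∈ P := hc k ▸ hgen.1
  refine LocallyGenerates.notMem_sq (v := ⟨P, hP, hbot⟩) hgen ((hc k).symm ▸ h0 k hk) ?_ ?_
  · intro y
    obtain ⟨a, b, hb, hy⟩ := hfrac y
    exact ⟨φ.rangeRestrict a, φ.rangeRestrict b, hb, hy⟩
  · obtain ⟨w, hw⟩ := exists_critOrbit_eq_mul_one_add hd.two_le (φ X) hi hki
    rw [hw, mul_comm] at hmem
    rw [hc]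
    exact (Ideal.IsPrime.mul_mem_pow _ hmem).resolve_left (one_add_mul_notMem hkP w)

theorem orbit_squarefree_general [CharZero D] {d m n : ℕ} (hd : d.Prime) (hm : 2 ≤ m) (hn : 1 ≤ n)
    {G : ℤ[X]} (hG : IsMisiurewicz d m n G) {c : D} (hroot : aeval c G = 0)
    (hfrac : ∀ y : D, ∃ a b : ℤ[X], aeval c b ≠ 0 ∧ aeval c b * y = aeval c a) {i : ℕ}
    (hi : 1 ≤ i) {P : Ideal D} (hP : P.IsPrime) : ¬P ^ 2 ∣ Ideal.span {critOrbit d c i} := by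
  set φ : ℤ[X] →+* D := (aeval c : ℤ[X] →ₐ[ℤ] D).toRingHom
  have hφX : φ X = c := aeval_X c
  have h0 (j : ℕ) (hj : 0 < j) : critOrbit d (φ X) j ≠ 0 :=
    critOrbit_ne_zero_of_isMisiurewicz hd.two_le (by omega) hn hG hroot hj
  have hinj : ¬Function.Injective (critOrbit d (φ X)) :=
    not_injective_critOrbit_of_isMisiurewicz hd.ne_zero (by omega) hG hroot
  rw [Ideal.dvd_span_singleton, ← hφX]
  exact critOrbit_notMem_sq hd hfrac h0 hinj hi hP

end Dedekind

/-- Let `d` be a prime, `m ≥ 2`, `n ≥ 1`, and `c₀` a root of `G_{d,m,n}`,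
`K = ℚ(c₀)`, `a_i = f_{c₀,d}^i(0)` for `1 ≤ i ≤ m+n-1`. Then every element `a_i` of the
critical orbit is square-free in `O_K`: the ideal `(a_i)` is not divisible by the square of
any prime ideal of `O_K`. -/
theorem orbit_squarefree (d m n : ℕ) (hd : d.Prime) (hm : 2 ≤ m) (hn : 1 ≤ n)
    (G : Polynomial ℤ) (hG : IsMisiurewicz d m n G)
    (K : Type*) [Field K] [NumberField K] (c₀ : NumberField.RingOfIntegers K)
    (hroot : Polynomial.aeval (c₀ : K) G = 0)
    (hgen : Algebra.adjoin ℚ {(c₀ : K)} = ⊤)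
    (i : ℕ) (hi1 : 1 ≤ i) (hi2 : i ≤ m + n - 1)
    (P : Ideal (NumberField.RingOfIntegers K)) (hP : P.IsPrime) :
    ¬ P ^ 2 ∣ Ideal.span {(fun x => x ^ d + c₀)^[i] 0} :=
  orbit_squarefree_general hd hm hn hG ((aeval_algebraMap_eq_zero_iff K c₀ G).mp hroot)
    (exists_aeval_mul_eq_aeval hgen) hi1 hP
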